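/- Consider the scalar pointwise-delay equation x(t) = Σ_{k=1}^N c_k x(t − τ_k) with c_k ∈ ℝ and delays τ_1, …, τ_N ∈ (0,1] that are rationally independent. If Σ_{k=1}^N |c_k| ≥ 1, then the equation is not exponentially stable: there exists a sequence of characteristic roots λ_j (solutions of 1 = Σ_k c_k e^{−λ_j τ_k}) with Re λ_j → 0 or Re λ_j ≥ 0. -/

import Mathlib

/-- Rational independence of finitely many reals. -/
def RatIndep {N : ℕ} (τ : Fin N → ℝ) : Prop :=
  ∀ q : Fin N → ℚ, (∑ k, (q k : ℝ) * τ k) = 0 → ∀ k, q k = 0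

open Complex in
lemma expInt_bound (ν : ℝ) (hν : ν ≠ 0) (T : ℝ) :
    ‖∫ t in (0:ℝ)..T, Complex.exp (I * ν * t)‖ ≤ 2 / |ν| := by
  have h : (I * ν : ℂ) ≠ 0 := mul_ne_zero I_ne_zero (by exact_mod_cast hν)
  rw [integral_exp_mul_complex h, norm_div]
  have h1 : ‖(I * ν : ℂ)‖ = |ν| := by simp
  rw [h1]
  gcongr
  refine (norm_sub_le _ _).trans ?_
  have e : ∀ x : ℝ, ‖Complex.exp (I * ν * x)‖ = 1 := by
    intro x
    rw [show (I * ν * x : ℂ) = ((ν * x : ℝ) : ℂ) * I by push_cast; ring]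
    exact norm_exp_ofReal_mul_I _
  rw [e T, e 0]; norm_num

open Complex in
lemma coef_bound {ι : Type*} (S : Finset ι) (a : ι → ℂ) (μ : ι → ℝ)
    (inj : ∀ i ∈ S, ∀ j ∈ S, μ i = μ j → i = j) (B : ℝ)
    (hB : ∀ t : ℝ, ‖∑ i ∈ S, a i * Complex.exp (I * μ i * t)‖ ≤ B) (j : ι) (hj : j ∈ S) :
    ‖a j‖ ≤ B := by
  classical
  set C : ℝ := ∑ i ∈ S.erase j, ‖a i‖ * (2 / |μ i - μ j|) with hC
  have key : ∀ T : ℝ, 0 < T → T * ‖a j‖ ≤ T * B + C := by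
    intro T hT
    have h1 : ∫ t in (0:ℝ)..T, (∑ i ∈ S, a i * Complex.exp (I * μ i * t)) *
        Complex.exp (-(I * μ j * t)) =
        T * a j + ∑ i ∈ S.erase j, a i * ∫ t in (0:ℝ)..T, Complex.exp (I * (μ i - μ j : ℝ) * t) := by
      have : ∀ t : ℝ, (∑ i ∈ S, a i * Complex.exp (I * μ i * t)) *
        Complex.exp (-(I * μ j * t)) =
          ∑ i ∈ S, a i * Complex.exp (I * (μ i - μ j : ℝ) * t) := by
        intro t
        rw [Finset.sum_mul]
        refine Finset.sum_congr rfl fun i _ => ?_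
        rw [mul_assoc, ← Complex.exp_add]
        congr 2
        push_cast; ring
      simp_rw [this]
      rw [intervalIntegral.integral_finsetSum
        (fun i _ => (Continuous.intervalIntegrable (by fun_prop) _ _))]
      simp_rw [intervalIntegral.integral_const_mul]
      rw [← Finset.add_sum_erase S _ hj]
      congr 1
      simp [mul_comm]
    have h2 : ‖∫ t in (0:ℝ)..T, (∑ i ∈ S, a i * Complex.exp (I * μ i * t)) *
        Complex.exp (-(I * μ j * t))‖ ≤ B * |T - 0| := by
      apply intervalIntegral.norm_integral_le_of_norm_le_const
      intro t _
      rw [norm_mul]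
      rw [show (-(I * μ j * t) : ℂ) = ((-(μ j * t) : ℝ) : ℂ) * I by push_cast; ring,
        norm_exp_ofReal_mul_I, mul_one]
      exact hB t
    have h3 : ‖∑ i ∈ S.erase j, a i * ∫ t in (0:ℝ)..T, Complex.exp (I * (μ i - μ j : ℝ) * t)‖ ≤ C := by
      refine (norm_sum_le _ _).trans (Finset.sum_le_sum fun i hi => ?_)
      rw [norm_mul]
      gcongr
      apply expInt_bound
      intro h0
      exact (Finset.ne_of_mem_erase hi) (inj i (Finset.mem_of_mem_erase hi) j hj (by linarith))
    rw [h1] at h2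
    rw [sub_zero, abs_of_pos hT] at h2
    have h4 := norm_sub_le_of_le h2 h3
    rw [add_sub_cancel_right, norm_mul] at h4
    simp only [Complex.norm_real, Real.norm_eq_abs, abs_of_pos hT] at h4
    linarith
  by_contra hcon
  push Not at hcon
  have hd : 0 < ‖a j‖ - B := by linarith
  have hC0 : 0 ≤ C := by rw [hC]; positivity
  have := key ((C + 1) / (‖a j‖ - B)) (by positivity)
  have h5 : (C + 1) / (‖a j‖ - B) * (‖a j‖ - B) = C + 1 := by field_simp
  nlinarith

lemma half_bound (ε : ℝ) (hε : 0 < ε) : ∃ ρ : ℝ, 0 < ρ ∧ ρ < 1 ∧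
    ∀ w : ℂ, ‖w‖ = 1 → ε ≤ ‖w - 1‖ → ‖(1 + w) / 2‖ ≤ ρ := by
  have hr : √(1 - ε ^ 2 / 4) < 1 := by
    rw [Real.sqrt_lt' one_pos]; nlinarith [sq_nonneg ε, pow_pos hε 2]
  refine ⟨max (√(1 - ε ^ 2 / 4)) (1 / 2), by positivity, max_lt hr (by norm_num), ?_⟩
  intro w hw h
  refine le_max_of_le_left (Real.le_sqrt_of_sq_le ?_)
  have hp := parallelogram_law_with_norm ℝ w 1
  rw [hw, norm_one] at hp
  rw [norm_div, Complex.norm_ofNat, add_comm 1 w]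
  have : ε ^ 2 ≤ ‖w - 1‖ ^ 2 := by gcongr
  nlinarith

open Complex in
lemma kron {N : ℕ} (τ : Fin N → ℝ) (hind : RatIndep τ) (s : Fin N → ℂ) (hs : ∀ k, ‖s k‖ = 1)
    (ε : ℝ) (hε : 0 < ε) :
    ∃ ω : ℝ, ∀ k, ‖Complex.exp (I * τ k * ω) - s k‖ < ε := by
  by_contra! hcon
  obtain ⟨ρ, hρ0, hρ1, hρ⟩ := half_bound ε hε
  have hs0 : ∀ k, s k ≠ 0 := fun k h => by simpa [h] using hs k
  have hexp : ∀ x y : ℝ, ‖Complex.exp (I * x * y)‖ = 1 := by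
    intro x y
    rw [show (I * x * y : ℂ) = ((x * y : ℝ) : ℂ) * I by push_cast; ring]
    exact norm_exp_ofReal_mul_I _
  have key : ∀ p : ℕ, (1 : ℝ) ≤ ((p + 1 : ℕ) : ℝ) ^ N * ρ ^ p := by
    intro p
    let S : Finset (Fin N → ℕ) := Fintype.piFinset (fun _ => Finset.range (p + 1))
    let a : (Fin N → ℕ) → ℂ := fun j => ∏ k, ((s k)⁻¹ ^ (j k) * (p.choose (j k) : ℂ) / 2 ^ p)
    let μ : (Fin N → ℕ) → ℝ := fun j => ∑ k, (j k : ℝ) * τ k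
    have hf : ∀ t : ℝ, ∑ j ∈ S, a j * Complex.exp (I * μ j * t) =
        ∏ k, ((1 + Complex.exp (I * τ k * t) / s k) / 2) ^ p := by
      intro t
      have : ∀ k, ((1 + Complex.exp (I * τ k * t) / s k) / 2) ^ p =
          ∑ j ∈ Finset.range (p + 1), ((s k)⁻¹ ^ j * (p.choose j : ℂ) / 2 ^ p) *
            Complex.exp (I * (j * τ k) * t) := by
        intro k
        rw [div_pow, add_comm, add_pow, Finset.sum_div]
        refine Finset.sum_congr rfl fun j _ => ?_
        rw [show (I * (j * τ k) * t : ℂ) = j * (I * τ k * t) by ring, Complex.exp_nat_mul]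
        rw [div_pow, one_pow, inv_pow]
        ring
      simp_rw [this]
      rw [Finset.prod_univ_sum]
      refine Finset.sum_congr rfl fun j _ => ?_
      rw [Finset.prod_mul_distrib, ← Complex.exp_sum]
      congr 2
      simp only [μ]
      push_cast
      rw [Finset.mul_sum, Finset.sum_mul]
    have hB : ∀ t : ℝ, ‖∑ j ∈ S, a j * Complex.exp (I * μ j * t)‖ ≤ ρ ^ p := by
      intro t
      rw [hf, Finset.prod_pow, norm_pow]
      gcongr
      obtain ⟨k, hk⟩ := hcon t
      rw [norm_prod, ← Finset.mul_prod_erase _ _ (Finset.mem_univ k)]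
      have hw : ∀ k, ‖Complex.exp (I * τ k * t) / s k‖ = 1 := by
        intro k; rw [norm_div, hexp, hs, div_one]
      have h1 := hρ _ (hw k) (by
        rw [div_sub_one (hs0 k), norm_div, hs, div_one]; exact hk)
      have h2 : ∏ l ∈ Finset.univ.erase k, ‖(1 + Complex.exp (I * τ l * t) / s l) / 2‖ ≤ 1 := by
        refine Finset.prod_le_one (fun _ _ => norm_nonneg _) fun l _ => ?_
        rw [norm_div, Complex.norm_ofNat]
        have := norm_add_le (1 : ℂ) (Complex.exp (I * τ l * t) / s l)
        rw [hw, norm_one] at this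
        linarith
      exact (mul_le_of_le_one_right (norm_nonneg _) h2).trans h1
    have inj : ∀ i ∈ S, ∀ j ∈ S, μ i = μ j → i = j := by
      intro i _ j _ h
      have := hind (fun k => (i k : ℚ) - j k) (by
        push_cast
        simp_rw [sub_mul]
        rw [Finset.sum_sub_distrib]
        exact sub_eq_zero.2 h)
      funext k
      have h2 := this k
      simp only [sub_eq_zero] at h2
      exact_mod_cast h2
    have hle := Finset.sum_le_sum (fun j hj => coef_bound S a μ inj _ hB j hj)
    have hsum : ∑ j ∈ S, ‖a j‖ = 1 := by
      have h0 : ∀ j, ‖a j‖ = ∏ k, ((p.choose (j k) : ℝ) / 2 ^ p) := by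
        intro j
        simp only [a, norm_prod, norm_div, norm_mul, norm_pow, norm_inv, hs]
        simp
      simp_rw [h0]
      rw [← Finset.prod_univ_sum (fun _ => Finset.range (p + 1))
        (fun _ j => (p.choose j : ℝ) / 2 ^ p)]
      have h3 : ∑ j ∈ Finset.range (p + 1), (p.choose j : ℝ) / 2 ^ p = 1 := by
        rw [← Finset.sum_div, div_eq_one_iff_eq (by positivity)]
        exact_mod_cast Nat.sum_range_choose p
      simp [h3]
    rw [hsum, Finset.sum_const, nsmul_eq_mul] at hle
    have hcard : S.card = (p + 1) ^ N := by simp [S]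
    rw [hcard] at hle
    exact_mod_cast hle
  have hlim := (tendsto_pow_const_mul_const_pow_of_lt_one N hρ0.le hρ1).comp
    (Filter.tendsto_add_atTop_nat 1)
  have := hlim.eventually (gt_mem_nhds hρ0)
  obtain ⟨p, hp⟩ := this.exists
  simp only [Function.comp] at hp
  have h1 := key p
  rw [pow_succ] at hp
  nlinarith

open Complex in
lemma hurw (f g : ℂ → ℂ) (z₀ : ℂ) (r m : ℝ) (hr : 0 < r) (hm : 0 < m) (hf0 : f z₀ = 0)
    (hfm : ∀ z ∈ Metric.sphere z₀ r, m ≤ ‖f z‖) (hg : Differentiable ℂ g)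
    (hfg : ∀ z ∈ Metric.closedBall z₀ r, ‖g z - f z‖ ≤ m / 16) :
    ∃ z ∈ Metric.closedBall z₀ r, g z = 0 := by
  have h0 : ‖g z₀‖ ≤ m / 16 := by
    simpa [hf0] using hfg z₀ (Metric.mem_closedBall_self hr.le)
  have hs : ∀ z ∈ Metric.sphere z₀ r, m / 2 ≤ ‖g z - g z₀‖ := by
    intro z hz
    have h1 := hfg z (Metric.sphere_subset_closedBall hz)
    have h2 := hfm z hz
    have h3 : ‖f z‖ ≤ ‖g z - g z₀‖ + ‖g z₀‖ + ‖g z - f z‖ := by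
      calc ‖f z‖ = ‖(g z - g z₀) + g z₀ - (g z - f z)‖ := by congr 1; ring
        _ ≤ _ := (norm_sub_le _ _).trans (by gcongr; exact norm_add_le _ _)
    linarith
  have hfreq : ∃ᶠ z in nhds z₀, g z ≠ g z₀ := by
    intro hcon
    simp only [not_not] at hcon
    have hA : AnalyticOnNhd ℂ g Set.univ := fun z _ => hg.analyticAt z
    have := hA.eqOn_of_preconnected_of_eventuallyEq (analyticOnNhd_const (v := g z₀))
      isPreconnected_univ (Set.mem_univ z₀) hcon
    obtain ⟨z, hz⟩ := NormedSpace.sphere_nonempty (x := z₀) (r := r) |>.2 hr.le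
    have h1 := hs z hz
    rw [this (Set.mem_univ z)] at h1
    simp at h1
    linarith
  have := hg.diffContOnCl.ball_subset_image_closedBall hr hs hfreq
  have hmem : (0 : ℂ) ∈ Metric.ball (g z₀) (m / 2 / 2) := by
    simp only [Metric.mem_ball, dist_zero_left]; linarith
  obtain ⟨z, hz, h⟩ := this hmem
  exact ⟨z, hz, h⟩

lemma exists_sigma {N : ℕ} (c : Fin N → ℝ) (τ : Fin N → ℝ)
    (hτ : ∀ k, τ k ∈ Set.Ioc (0:ℝ) 1) (hc : 1 ≤ ∑ k, |c k|) :
    ∃ σ : ℝ, 0 ≤ σ ∧ ∑ k, |c k| * Real.exp (-σ * τ k) = 1 := by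
  have hlim : Filter.Tendsto (fun σ : ℝ => ∑ k, |c k| * Real.exp (-σ * τ k)) Filter.atTop
      (nhds (∑ k : Fin N, |c k| * 0)) := by
    refine tendsto_finsetSum _ fun k _ => Filter.Tendsto.const_mul _ ?_
    refine Real.tendsto_exp_atBot.comp ?_
    exact (Filter.tendsto_neg_atTop_atBot).atBot_mul_const (hτ k).1
  simp only [mul_zero, Finset.sum_const_zero] at hlim
  obtain ⟨b, hb, hb0⟩ := ((hlim.eventually (gt_mem_nhds one_pos)).and
    (Filter.eventually_ge_atTop 0)).exists
  have hcont : ContinuousOn (fun σ : ℝ => ∑ k, |c k| * Real.exp (-σ * τ k)) (Set.Icc 0 b) := by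
    fun_prop
  obtain ⟨σ, hσ, h⟩ := intermediate_value_Icc' hb0 hcont
    (show (1 : ℝ) ∈ Set.Icc _ _ from ⟨hb.le, by simpa using hc⟩)
  exact ⟨σ, hσ.1, h⟩

open Complex in
lemma exists_root {N : ℕ} (c : Fin N → ℝ) (τ : Fin N → ℝ)
    (hτ : ∀ k, τ k ∈ Set.Ioc (0:ℝ) 1) (hind : RatIndep τ)
    (σ : ℝ) (hσ0 : 0 ≤ σ) (hσ : ∑ k, |c k| * Real.exp (-σ * τ k) = 1) (ε : ℝ) (hε : 0 < ε) :
    ∃ z : ℂ, (1 : ℂ) = ∑ k, (c k : ℂ) * Complex.exp (-z * τ k) ∧ |z.re - σ| ≤ ε := by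
  let f : ℂ → ℂ := fun z => 1 - ∑ k, (|c k| : ℝ) * Complex.exp (-z * τ k)
  have hfσ : f σ = 0 := by
    simp only [f]
    rw [sub_eq_zero]
    have := congrArg (fun x : ℝ => (x : ℂ)) hσ
    push_cast at this
    exact this.symm
  have hder : HasDerivAt f (∑ k, (|c k| : ℝ) * (Complex.exp (-(σ : ℂ) * τ k) * τ k)) σ := by
    have : HasDerivAt f (-∑ k, (|c k| : ℝ) * (Complex.exp (-(σ : ℂ) * τ k) * (-1 * τ k))) σ := by
      refine HasDerivAt.const_sub _ (HasDerivAt.fun_sum fun k _ => ?_)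
      exact (((hasDerivAt_id (σ : ℂ)).neg.mul_const _).cexp).const_mul _
    convert this using 1
    rw [← Finset.sum_neg_distrib]
    refine Finset.sum_congr rfl fun k _ => by ring
  have hd : (∑ k, (|c k| : ℝ) * (Complex.exp (-(σ : ℂ) * τ k) * τ k)) ≠ 0 := by
    have hpos : 0 < ∑ k, |c k| * (Real.exp (-σ * τ k) * τ k) := by
      have hnn : ∀ k, 0 ≤ |c k| * (Real.exp (-σ * τ k) * τ k) := fun k => by
        have := (hτ k).1; positivity
      refine (Finset.sum_nonneg fun k _ => hnn k).lt_of_ne' fun h0 => ?_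
      rw [Finset.sum_eq_zero_iff_of_nonneg fun k _ => hnn k] at h0
      have : ∑ k, |c k| * Real.exp (-σ * τ k) = 0 := by
        refine Finset.sum_eq_zero fun k hk => ?_
        have h1 := h0 k hk
        rw [← mul_assoc] at h1
        exact (mul_eq_zero.1 h1).resolve_right (hτ k).1.ne'
      linarith
    have : (∑ k, (|c k| : ℝ) * (Complex.exp (-(σ : ℂ) * τ k) * τ k)) =
      ((∑ k, |c k| * (Real.exp (-σ * τ k) * τ k) : ℝ) : ℂ) := by push_cast; rfl
    rw [this]
    exact_mod_cast hpos.ne'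
  have hne := hder.eventually_ne (c := 0) hd
  rw [eventually_nhdsWithin_iff, Metric.eventually_nhds_iff] at hne
  obtain ⟨δ, hδ, hne⟩ := hne
  obtain ⟨r, hr, hrm⟩ : ∃ r, 0 < r ∧ r < min δ (min ε 1) := exists_between (by positivity)
  have hrδ : r < δ := hrm.trans_le (min_le_left _ _)
  have hrε : r < ε := hrm.trans_le ((min_le_right _ _).trans (min_le_left _ _))
  have hr1 : r < 1 := hrm.trans_le ((min_le_right _ _).trans (min_le_right _ _))
  have hfc : Continuous f := by fun_prop
  obtain ⟨z₁, hz₁, hmin⟩ := (isCompact_sphere (σ : ℂ) r).exists_isMinOn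
    (NormedSpace.sphere_nonempty.2 hr.le) hfc.norm.continuousOn
  have hm : 0 < ‖f z₁‖ := by
    rw [norm_pos_iff]
    have hd1 : dist z₁ σ = r := hz₁
    refine hne (by rw [hd1]; exact hrδ) ?_
    rintro rfl
    simp at hd1
    linarith
  set m := ‖f z₁‖ with hmdef
  let C : ℝ := Real.exp 1 * ∑ k, |c k|
  have hC : 0 ≤ C := by positivity
  let η : ℝ := m / 16 / (C + 1)
  have hη : 0 < η := by positivity
  have hCη : C * η ≤ m / 16 := by
    have : (C + 1) * η = m / 16 := by simp only [η]; field_simp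
    nlinarith
  obtain ⟨ω, hω⟩ := kron τ hind (fun k => if c k < 0 then -1 else 1)
    (fun k => by split_ifs <;> simp) η hη
  let g : ℂ → ℂ := fun z => 1 - ∑ k, (c k : ℂ) * Complex.exp (-(z - I * ω) * τ k)
  have hgd : Differentiable ℂ g := by fun_prop
  obtain ⟨z, hz, hgz⟩ := hurw f g σ r m hr hm hfσ (fun z hz => hmin hz) hgd (by
    intro z hz
    have e1 : g z - f z = -∑ k, (c k : ℂ) * Complex.exp (-z * τ k) *
        (Complex.exp (I * τ k * ω) - (if c k < 0 then -1 else 1)) := by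
      simp only [g, f]
      rw [sub_sub_sub_cancel_left, ← Finset.sum_sub_distrib, ← Finset.sum_neg_distrib]
      refine Finset.sum_congr rfl fun k _ => ?_
      rw [show -(z - I * ω) * τ k = -z * τ k + I * τ k * ω by ring, Complex.exp_add]
      split_ifs with h
      · rw [abs_of_neg h]; push_cast; ring
      · rw [abs_of_nonneg (not_lt.1 h)]; ring
    rw [e1, norm_neg]
    refine le_trans ?_ hCη
    refine (norm_sum_le _ _).trans ?_
    simp only [C]
    rw [Finset.mul_sum, Finset.sum_mul]
    refine Finset.sum_le_sum fun k _ => ?_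
    rw [norm_mul, norm_mul, mul_comm (Real.exp 1)]
    have hre : |z.re - σ| ≤ r := by
      have := (Complex.abs_re_le_norm (z - σ)).trans (mem_closedBall_iff_norm.1 hz)
      simpa using this
    have h1 : ‖Complex.exp (-z * τ k)‖ ≤ Real.exp 1 := by
      rw [Complex.norm_exp]
      apply Real.exp_le_exp.2
      simp
      have := (abs_le.1 hre).1
      have h2 := (hτ k).1
      have h3 := (hτ k).2
      nlinarith
    have h2 : ‖(c k : ℂ)‖ = |c k| := by simp
    rw [h2]
    have := (hω k).le
    gcongr)
  refine ⟨z - I * ω, (sub_eq_zero.1 hgz), ?_⟩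
  have := (Complex.abs_re_le_norm (z - σ)).trans (mem_closedBall_iff_norm.1 hz)
  simp at this ⊢
  linarith

/-- for the scalar equation `x(t) = Σ_k c_k x(t − τ_k)` with rationally
independent delays `τ_k ∈ (0,1]`, if `Σ_k |c_k| ≥ 1` then the equation is not
exponentially stable: there is a sequence of characteristic roots `λ_j` (solutions of
`1 = Σ_k c_k e^{−λ τ_k}`) with `Re λ_j → 0` or `Re λ_j ≥ 0` for all `j`. -/
theorem stmt19 (N : ℕ) (c : Fin N → ℝ) (τ : Fin N → ℝ)
    (hτ : ∀ k, τ k ∈ Set.Ioc (0:ℝ) 1) (hind : RatIndep τ)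
    (hc : 1 ≤ ∑ k, |c k|) :
    ∃ lam : ℕ → ℂ,
      (∀ j, (1 : ℂ) = ∑ k, (c k : ℂ) * Complex.exp (-(lam j) * τ k)) ∧
      (Filter.Tendsto (fun j => (lam j).re) Filter.atTop (nhds 0) ∨
        ∀ j, 0 ≤ (lam j).re) := by
  obtain ⟨σ, hσ0, hσ⟩ := exists_sigma c τ hτ hc
  rcases hσ0.eq_or_lt with h | h
  · subst h
    choose lam h1 h2 using fun j : ℕ => exists_root c τ hτ hind 0 le_rfl hσ (1 / ((j : ℝ) + 1))
      (by positivity)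
    refine ⟨lam, h1, Or.inl ?_⟩
    refine squeeze_zero_norm (fun j => ?_) tendsto_one_div_add_atTop_nhds_zero_nat
    simpa using h2 j
  · obtain ⟨z, h1, h2⟩ := exists_root c τ hτ hind σ hσ0 hσ σ h
    exact ⟨fun _ => z, fun _ => h1, Or.inr fun _ => by have := (abs_le.1 h2).1; linarith⟩
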